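/- For every k ≥ 2, the inclusion of the family of context-free languages of index at most k in the family of languages generated by CD grammar systems with at most two context-free components working in the (t∧=k)-mode is strict: L_k(CF) ⊊ L(CD_2, CF[−λ], (t∧=k)), both with and without erasing rules. -/

import Mathlib

namespace CDHybrid

/-- Symbols: nonterminals are natural numbers, terminals come from `T`. -/
abbrev Symb (T : Type) := ℕ ⊕ T

/-- Sentential forms. -/
abbrev SForm (T : Type) := List (Symb T)

/-- A context-free rule `A → z`. -/
abbrev Rule (T : Type) := ℕ × SForm T

/-- Number of nonterminal occurrences in a sentential form. -/
def ntCount {T : Type} (x : SForm T) : ℕ := (x.filter Sum.isLeft).length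

/-- One rewriting step using some rule of the rule set `P`. -/
def RStep {T : Type} (P : List (Rule T)) (x y : SForm T) : Prop :=
  ∃ r ∈ P, ∃ u v : SForm T, x = u ++ Sum.inl r.1 :: v ∧ y = u ++ r.2 ++ v

/-- `m`-step derivation using only rules of `P`. -/
def StepsN {T : Type} (P : List (Rule T)) : ℕ → SForm T → SForm T → Prop
  | 0, x, y => x = y
  | m + 1, x, y => ∃ z, RStep P x z ∧ StepsN P m z y

/-- `m`-step derivation using only rules of `P`, all intermediate (and the final)
sentential forms having at most `b` occurrences of nonterminals. -/
def StepsNB {T : Type} (P : List (Rule T)) (b : ℕ) : ℕ → SForm T → SForm T → Prop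
  | 0, x, y => x = y
  | m + 1, x, y => ∃ z, RStep P x z ∧ ntCount z ≤ b ∧ StepsNB P b m z y

/-- Derivation modes of CD grammar systems. -/
inductive Mode where
  | eq : ℕ → Mode
  | le : ℕ → Mode
  | ge : ℕ → Mode
  | star : Mode
  | t : Mode
  | conj : Mode → Mode → Mode

/-- The predicate of a derivation mode: `modeOK P f m y` holds if an `m`-step
derivation by the component `P` ending in `y` is acceptable for mode `f`. -/
def modeOK {T : Type} (P : List (Rule T)) : Mode → ℕ → SForm T → Prop
  | .eq k, m, _ => m = k
  | .le k, m, _ => m ≤ k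
  | .ge k, m, _ => k ≤ m
  | .star, _, _ => True
  | .t, _, y => ¬ ∃ z, RStep P y z
  | .conj f g, m, y => modeOK P f m y ∧ modeOK P g m y

/-- A CD grammar system with context-free components. -/
structure CDGS (T : Type) where
  deg : ℕ
  start : ℕ
  comp : Fin deg → List (Rule T)

/-- λ-freeness: no erasing rules. -/
def CDGS.LamFree {T : Type} (G : CDGS T) : Prop :=
  ∀ i : Fin G.deg, ∀ r ∈ G.comp i, r.2 ≠ []

/-- One derivation step of a component of `G` in mode `f`. -/
def CDGS.ModeStep {T : Type} (G : CDGS T) (f : Mode) (x y : SForm T) : Prop :=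
  ∃ i : Fin G.deg, ∃ m : ℕ, StepsN (G.comp i) m x y ∧ modeOK (G.comp i) f m y

/-- One derivation step of a component of `G` in mode `f`, with all produced
sentential forms having at most `b` nonterminal occurrences. -/
def CDGS.ModeStepB {T : Type} (G : CDGS T) (f : Mode) (b : ℕ) (x y : SForm T) : Prop :=
  ∃ i : Fin G.deg, ∃ m : ℕ, StepsNB (G.comp i) b m x y ∧ modeOK (G.comp i) f m y

/-- The language generated by `G` in mode `f`. -/
def CDGS.lang {T : Type} (G : CDGS T) (f : Mode) : Set (List T) :=
  { w | Relation.TransGen (G.ModeStep f) [Sum.inl G.start] (w.map Sum.inr) }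

/-- The words of the language of `G` in mode `f` possessing a derivation of index
at most `b`, i.e., all sentential forms occurring in it have at most `b`
nonterminal occurrences. -/
def CDGS.langB {T : Type} (G : CDGS T) (f : Mode) (b : ℕ) : Set (List T) :=
  { w | ntCount ([Sum.inl G.start] : SForm T) ≤ b ∧
      Relation.TransGen (G.ModeStepB f b) [Sum.inl G.start] (w.map Sum.inr) }

/-- Two languages are considered equal iff they differ at most in the empty word. -/
def EqL {T : Type} (L₁ L₂ : Set (List T)) : Prop := L₁ \ {[]} = L₂ \ {[]}

/-- The family `L(CD_n, CF[−λ], f)`; `lf = true` forbids erasing rules. -/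
def CDFam (T : Type) (lf : Bool) (n : ℕ) (f : Mode) : Set (Set (List T)) :=
  { L | ∃ G : CDGS T, G.deg ≤ n ∧ (lf = true → G.LamFree) ∧ EqL (G.lang f) L }

/-- The family `L(CD_∞, CF[−λ], f)`. -/
def CDFamInf (T : Type) (lf : Bool) (f : Mode) : Set (Set (List T)) :=
  { L | ∃ G : CDGS T, (lf = true → G.LamFree) ∧ EqL (G.lang f) L }

/-- The family `L_m(CD_n, CF[−λ], f)` of such languages of index at most `m`. -/
def CDFamInd (T : Type) (lf : Bool) (n : ℕ) (f : Mode) (m : ℕ) : Set (Set (List T)) :=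
  { L | ∃ G : CDGS T, G.deg ≤ n ∧ (lf = true → G.LamFree) ∧ EqL (G.lang f) L ∧
      G.lang f ⊆ G.langB f m }

/-- The family `L_m(CD_∞, CF[−λ], f)`. -/
def CDFamIndInf (T : Type) (lf : Bool) (f : Mode) (m : ℕ) : Set (Set (List T)) :=
  { L | ∃ G : CDGS T, (lf = true → G.LamFree) ∧ EqL (G.lang f) L ∧ G.lang f ⊆ G.langB f m }

/-- The family `L_fin(CD_∞, CF[−λ], f)`. -/
def CDFamFinInf (T : Type) (lf : Bool) (f : Mode) : Set (Set (List T)) :=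
  { L | ∃ m : ℕ, 1 ≤ m ∧ L ∈ CDFamIndInf T lf f m }

/-- A context-free grammar. -/
structure CFG (T : Type) where
  start : ℕ
  rules : List (Rule T)

/-- The language generated by a context-free grammar. -/
def CFG.lang {T : Type} (G : CFG T) : Set (List T) :=
  { w | Relation.ReflTransGen (RStep G.rules) [Sum.inl G.start] (w.map Sum.inr) }

/-- The words of `G.lang` having a derivation of index at most `m`. -/
def CFG.langB {T : Type} (G : CFG T) (m : ℕ) : Set (List T) :=
  { w | ntCount ([Sum.inl G.start] : SForm T) ≤ m ∧
      Relation.ReflTransGen (fun x y => RStep G.rules x y ∧ ntCount y ≤ m)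
        [Sum.inl G.start] (w.map Sum.inr) }

/-- The family `L(CF)` of context-free languages. -/
def CFFam (T : Type) : Set (Set (List T)) := { L | ∃ G : CFG T, EqL G.lang L }

/-- The family `L_m(CF)` of context-free languages of index at most `m`. -/
def CFFamInd (T : Type) (m : ℕ) : Set (Set (List T)) :=
  { L | ∃ G : CFG T, EqL G.lang L ∧ G.lang ⊆ G.langB m }

/-- The family `L_fin(CF)` of context-free languages of finite index. -/
def CFFamFin (T : Type) : Set (Set (List T)) :=
  { L | ∃ m : ℕ, 1 ≤ m ∧ L ∈ CFFamInd T m }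

/-- A grammar is linear if every right-hand side contains at most one nonterminal. -/
def CFG.Linear {T : Type} (G : CFG T) : Prop := ∀ r ∈ G.rules, ntCount r.2 ≤ 1

/-- The family `L(LIN)` of linear context-free languages. -/
def LinFam (T : Type) : Set (Set (List T)) :=
  { L | ∃ G : CFG T, G.Linear ∧ EqL G.lang L }

/-- The family `L(FIN)` of finite languages. -/
def FinFam (T : Type) : Set (Set (List T)) := { L | L.Finite }

/-- A programmed grammar with context-free rules. -/
structure PG (T : Type) where
  start : ℕ
  nLab : ℕ
  rule : Fin nLab → Rule T
  succ : Fin nLab → Set (Fin nLab)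
  fail : Fin nLab → Set (Fin nLab)

def PG.LamFree {T : Type} (G : PG T) : Prop := ∀ r : Fin G.nLab, (G.rule r).2 ≠ []

/-- No appearance checking: all failure fields are empty. -/
def PG.NoAC {T : Type} (G : PG T) : Prop := ∀ r : Fin G.nLab, G.fail r = ∅

/-- One step of a programmed grammar on pairs (sentential form, label). -/
def PG.PStep {T : Type} (G : PG T) (p q : SForm T × Fin G.nLab) : Prop :=
  (∃ u v : SForm T, p.1 = u ++ Sum.inl (G.rule p.2).1 :: v ∧
      q.1 = u ++ (G.rule p.2).2 ++ v ∧ q.2 ∈ G.succ p.2) ∨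
  (Sum.inl (G.rule p.2).1 ∉ p.1 ∧ q.1 = p.1 ∧ q.2 ∈ G.fail p.2)

/-- The language generated by a programmed grammar. -/
def PG.lang {T : Type} (G : PG T) : Set (List T) :=
  { w | ∃ r₁ r₂ : Fin G.nLab,
      Relation.ReflTransGen G.PStep ([Sum.inl G.start], r₁) (w.map Sum.inr, r₂) }

/-- The words of `G.lang` having a derivation of index at most `m`. -/
def PG.langB {T : Type} (G : PG T) (m : ℕ) : Set (List T) :=
  { w | ∃ r₁ r₂ : Fin G.nLab, ntCount ([Sum.inl G.start] : SForm T) ≤ m ∧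
      Relation.ReflTransGen (fun p q => G.PStep p q ∧ ntCount q.1 ≤ m)
        ([Sum.inl G.start], r₁) (w.map Sum.inr, r₂) }

/-- The family `L_m(P, CF[−λ][, ac])`: programmed languages of index at most `m`;
`ac = false` forbids appearance checking, `lf = true` forbids erasing rules. -/
def PFamInd (T : Type) (lf ac : Bool) (m : ℕ) : Set (Set (List T)) :=
  { L | ∃ G : PG T, (lf = true → G.LamFree) ∧ (ac = false → G.NoAC) ∧
      EqL G.lang L ∧ G.lang ⊆ G.langB m }

/-- The family `L_fin(P, CF[−λ][, ac])` of programmed languages of finite index. -/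
def PFamFin (T : Type) (lf ac : Bool) : Set (Set (List T)) :=
  { L | ∃ m : ℕ, 1 ≤ m ∧ L ∈ PFamInd T lf ac m }


/-! ### Generic facts -/

section generic
variable {T : Type}

theorem rstep_ctx {P : List (Rule T)} {x y : SForm T} (h : RStep P x y) (u v : SForm T) :
    RStep P (u ++ x ++ v) (u ++ y ++ v) := by
  obtain ⟨r, hr, a, b, rfl, rfl⟩ := h
  exact ⟨r, hr, u ++ a, b ++ v, by simp, by simp⟩

theorem rtg_ctx {P : List (Rule T)} {x y : SForm T}
    (h : Relation.ReflTransGen (RStep P) x y) (u v : SForm T) :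
    Relation.ReflTransGen (RStep P) (u ++ x ++ v) (u ++ y ++ v) := by
  induction h with
  | refl => exact .refl
  | tail _ hs ih => exact ih.tail (rstep_ctx hs u v)

theorem rtg_par {P : List (Rule T)} {x y x' y' : SForm T}
    (h : Relation.ReflTransGen (RStep P) x y) (h' : Relation.ReflTransGen (RStep P) x' y') :
    Relation.ReflTransGen (RStep P) (x ++ x') (y ++ y') := by
  have a := rtg_ctx h [] x'
  have b := rtg_ctx h' y []
  simp only [List.nil_append, List.append_nil] at a b
  exact a.trans b

theorem rstep_rule {P : List (Rule T)} {A : ℕ} {z : SForm T} (h : (A, z) ∈ P) :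
    RStep P [Sum.inl A] z := ⟨_, h, [], [], by simp, by simp⟩

theorem rstep_single {P : List (Rule T)} {s : Symb T} {y : SForm T} (h : RStep P [s] y) :
    ∃ A, s = Sum.inl A ∧ (A, y) ∈ P := by
  obtain ⟨r, hr, u, v, h1, rfl⟩ := h
  rcases u with _ | ⟨a, u⟩
  · simp at h1
    obtain ⟨rfl, rfl⟩ := h1
    exact ⟨r.1, rfl, by simpa using hr⟩
  · simp at h1

theorem rstep_nil {P : List (Rule T)} {y : SForm T} (h : RStep P [] y) : False := by
  obtain ⟨r, hr, u, v, h1, rfl⟩ := h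
  simp at h1

theorem rstep_split {P : List (Rule T)} {x1 x2 y : SForm T} (h : RStep P (x1 ++ x2) y) :
    (∃ y1, RStep P x1 y1 ∧ y = y1 ++ x2) ∨ (∃ y2, RStep P x2 y2 ∧ y = x1 ++ y2) := by
  obtain ⟨r, hr, u, v, h1, rfl⟩ := h
  rcases List.append_eq_append_iff.1 h1 with ⟨a, rfl, rfl⟩ | ⟨c, rfl, h2⟩
  · right
    exact ⟨a ++ r.2 ++ v, ⟨r, hr, a, v, rfl, rfl⟩, by simp⟩
  · rcases c with _ | ⟨b, c⟩
    · right
      simp at h2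
      exact ⟨r.2 ++ v, ⟨r, hr, [], v, by simp [h2], by simp⟩, by simp⟩
    · simp at h2
      obtain ⟨rfl, rfl⟩ := h2
      left
      exact ⟨u ++ r.2 ++ c, ⟨r, hr, u, c, rfl, rfl⟩, by simp⟩

theorem stepsN_split {P : List (Rule T)} {m : ℕ} : ∀ {x1 x2 y : SForm T},
    StepsN P m (x1 ++ x2) y →
    ∃ m1 m2 y1 y2, m1 + m2 = m ∧ y = y1 ++ y2 ∧ StepsN P m1 x1 y1 ∧ StepsN P m2 x2 y2 := by
  induction m with
  | zero =>
    intro x1 x2 y h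
    exact ⟨0, 0, x1, x2, rfl, h.symm, rfl, rfl⟩
  | succ m ih =>
    rintro x1 x2 y ⟨z, hz, h⟩
    rcases rstep_split hz with ⟨y1, h1, rfl⟩ | ⟨y1, h1, rfl⟩
    · obtain ⟨m1, m2, a, b, e, e', ha, hb⟩ := ih h
      exact ⟨m1 + 1, m2, a, b, by omega, e', ⟨_, h1, ha⟩, hb⟩
    · obtain ⟨m1, m2, a, b, e, e', ha, hb⟩ := ih h
      exact ⟨m1, m2 + 1, a, b, by omega, e', ha, ⟨_, h1, hb⟩⟩

theorem stepsN_rtg {P : List (Rule T)} {m : ℕ} : ∀ {x y : SForm T},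
    StepsN P m x y → Relation.ReflTransGen (RStep P) x y := by
  induction m with
  | zero => intro x y h; cases h; exact .refl
  | succ m ih =>
    rintro x y ⟨z, hz, h⟩
    exact .head hz (ih h)

theorem rtg_stepsN {P : List (Rule T)} {x y : SForm T}
    (h : Relation.ReflTransGen (RStep P) x y) : ∃ m, StepsN P m x y := by
  induction h using Relation.ReflTransGen.head_induction_on with
  | refl => exact ⟨0, rfl⟩
  | head hs _ ih =>
    obtain ⟨m, hm⟩ := ih
    exact ⟨m + 1, _, hs, hm⟩

theorem stepsN_trans {P : List (Rule T)} {m n : ℕ} {x y z : SForm T}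
    (h : StepsN P m x y) (h' : StepsN P n y z) : StepsN P (m + n) x z := by
  induction m generalizing x with
  | zero => cases h; simpa using h'
  | succ m ih =>
    obtain ⟨a, ha, h⟩ := h
    rw [Nat.add_right_comm]
    exact ⟨a, ha, ih h⟩

theorem stepsN_ctx {P : List (Rule T)} {m : ℕ} {x y : SForm T} (h : StepsN P m x y)
    (u v : SForm T) : StepsN P m (u ++ x ++ v) (u ++ y ++ v) := by
  induction m generalizing x with
  | zero => cases h; rfl
  | succ m ih =>
    obtain ⟨a, ha, h⟩ := h
    exact ⟨_, rstep_ctx ha u v, ih h⟩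

theorem stepsN_par {P : List (Rule T)} {m n : ℕ} {x y x' y' : SForm T}
    (h : StepsN P m x y) (h' : StepsN P n x' y') : StepsN P (m + n) (x ++ x') (y ++ y') := by
  have a := stepsN_ctx h [] x'
  have b := stepsN_ctx h' y []
  simp only [List.nil_append, List.append_nil] at a b
  exact stepsN_trans a b

theorem stepsN_one {P : List (Rule T)} {A : ℕ} {z : SForm T} (h : (A, z) ∈ P) :
    StepsN P 1 [Sum.inl A] z := ⟨z, rstep_rule h, rfl⟩

theorem stepsN_loop {P : List (Rule T)} {A : ℕ} {z : SForm T}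
    (h0 : (A, [Sum.inl A]) ∈ P) (h : (A, z) ∈ P) (j : ℕ) :
    StepsN P (j + 1) [Sum.inl A] z := by
  induction j with
  | zero => exact stepsN_one h
  | succ j ih => exact ⟨_, rstep_rule h0, ih⟩

theorem ntCount_append (x y : SForm T) : ntCount (x ++ y) = ntCount x + ntCount y := by
  simp [ntCount]

theorem ntCount_cons_inl (A : ℕ) (y : SForm T) :
    ntCount (Sum.inl A :: y) = ntCount y + 1 := rfl

theorem ntCount_cons_inr (a : T) (y : SForm T) :
    ntCount (Sum.inr a :: y) = ntCount y := rfl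

/-! ### Elimination of erasing rules -/

/-- `Del N x y`: `y` arises from `x` by deleting some nonterminals of `N`. -/
inductive Del (N : ℕ → Prop) : SForm T → SForm T → Prop
  | nil : Del N [] []
  | keep (s : Symb T) {x y : SForm T} : Del N x y → Del N (s :: x) (s :: y)
  | drop (A : ℕ) {x y : SForm T} : N A → Del N x y → Del N (Sum.inl A :: x) y

theorem Del.refl (N : ℕ → Prop) (x : SForm T) : Del N x x := by
  induction x with
  | nil => exact .nil
  | cons s x ih => exact .keep s ih

theorem Del.sublist {N : ℕ → Prop} {x y : SForm T} (h : Del N x y) : y.Sublist x := by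
  induction h with
  | nil => exact .refl _
  | keep s _ ih => exact ih.cons_cons s
  | drop A _ _ ih => exact ih.cons _

theorem Del.append {N : ℕ → Prop} {x y x' y' : SForm T} (h : Del N x y) (h' : Del N x' y') :
    Del N (x ++ x') (y ++ y') := by
  induction h with
  | nil => exact h'
  | keep s _ ih => exact .keep s ih
  | drop A hA _ ih => exact .drop A hA ih

theorem Del.split {N : ℕ → Prop} {x1 x2 y : SForm T} (h : Del N (x1 ++ x2) y) :
    ∃ y1 y2, y = y1 ++ y2 ∧ Del N x1 y1 ∧ Del N x2 y2 := by
  induction x1 generalizing y with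
  | nil => exact ⟨[], y, rfl, .nil, h⟩
  | cons s x1 ih =>
    cases h with
    | keep _ h =>
      obtain ⟨a, b, rfl, ha, hb⟩ := ih h
      exact ⟨s :: a, b, rfl, .keep s ha, hb⟩
    | drop A hA h =>
      obtain ⟨a, b, rfl, ha, hb⟩ := ih h
      exact ⟨a, b, rfl, .drop A hA ha, hb⟩

/-- Nullable nonterminals. -/
def Nul (P : List (Rule T)) (A : ℕ) : Prop :=
  Relation.ReflTransGen (RStep P) [Sum.inl A] []

theorem Del.rtg {P : List (Rule T)} {x y : SForm T} (h : Del (Nul P) x y) :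
    Relation.ReflTransGen (RStep P) x y := by
  induction h with
  | nil => exact .refl
  | keep s _ ih => exact rtg_par (.refl : Relation.ReflTransGen (RStep P) [s] [s]) ih
  | drop A hA _ ih => exact rtg_par hA ih

open Classical in
/-- The rules of the grammar without erasing rules. -/
noncomputable def elimRules (P : List (Rule T)) : List (Rule T) :=
  P.flatMap fun r => (r.2.sublists.filter fun z => Del (Nul P) r.2 z ∧ z ≠ []).map fun z => (r.1, z)

theorem mem_elimRules {P : List (Rule T)} {A : ℕ} {z : SForm T} :
    (A, z) ∈ elimRules P ↔ z ≠ [] ∧ ∃ z0, (A, z0) ∈ P ∧ Del (Nul P) z0 z := by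
  simp only [elimRules, List.mem_flatMap, List.mem_map, List.mem_filter, List.mem_sublists,
    decide_eq_true_eq, Prod.mk.injEq]
  constructor
  · rintro ⟨⟨B, z0⟩, hr, z', ⟨_, h2, h3⟩, rfl, rfl⟩
    exact ⟨h3, z0, hr, h2⟩
  · rintro ⟨h, z0, hr, hd⟩
    exact ⟨(A, z0), hr, z, ⟨hd.sublist, hd, h⟩, rfl, rfl⟩

theorem elim_sound {P : List (Rule T)} {x y : SForm T}
    (h : Relation.ReflTransGen (RStep (elimRules P)) x y) :
    Relation.ReflTransGen (RStep P) x y := by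
  induction h with
  | refl => exact .refl
  | tail _ hs ih =>
    refine ih.trans ?_
    obtain ⟨⟨A, z⟩, hr, u, v, rfl, rfl⟩ := hs
    obtain ⟨_, z0, h0, hd⟩ := mem_elimRules.1 hr
    have := rtg_ctx ((Relation.ReflTransGen.single (rstep_rule h0)).trans hd.rtg) u v
    simpa using this

theorem elim_complete {P : List (Rule T)} {k : ℕ} {x y : SForm T}
    (h : Relation.ReflTransGen (fun x y => RStep P x y ∧ ntCount y ≤ k) x y) :
    ∃ x', Del (Nul P) x x' ∧
      Relation.ReflTransGen (fun x y => RStep (elimRules P) x y ∧ ntCount y ≤ k) x' y := by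
  induction h using Relation.ReflTransGen.head_induction_on with
  | refl => exact ⟨y, Del.refl _ _, .refl⟩
  | head hs _ ih =>
    obtain ⟨y', hd, hy⟩ := ih
    obtain ⟨⟨⟨A, z⟩, hr, u, v, rfl, rfl⟩, hk⟩ := hs
    have hcount : ntCount y' ≤ k := ((hd.sublist.filter _).length_le).trans hk
    obtain ⟨yy, v', rfl, hd1, hv⟩ := hd.split
    obtain ⟨u', z', rfl, hu, hz⟩ := hd1.split
    by_cases hz' : z' = []
    · subst hz'
      refine ⟨u' ++ v', hu.append (.drop A ?_ hv), by simpa using hy⟩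
      exact (Relation.ReflTransGen.single (rstep_rule hr)).trans hz.rtg
    · refine ⟨u' ++ Sum.inl A :: v', hu.append (.keep _ hv), .head ⟨?_, hcount⟩ hy⟩
      exact ⟨(A, z'), mem_elimRules.2 ⟨hz', z, hr, hz⟩, u', v', rfl, rfl⟩

theorem exists_lamFree {k : ℕ} {L : Set (List T)} (G : CFG T) (hL : EqL G.lang L)
    (hi : G.lang ⊆ G.langB k) :
    ∃ G' : CFG T, EqL G'.lang L ∧ G'.lang ⊆ G'.langB k ∧ ∀ r ∈ G'.rules, r.2 ≠ [] := by
  have key : ∀ w ∈ G.lang, w ≠ [] → w ∈ (CFG.mk G.start (elimRules G.rules)).langB k := by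
    intro w hw hne
    obtain ⟨h1, h2⟩ := hi hw
    refine ⟨h1, ?_⟩
    obtain ⟨x', hd, hx⟩ := elim_complete h2
    cases hd with
    | keep _ h => cases h; exact hx
    | drop A hA h =>
      cases h
      exfalso
      rcases hx.cases_head with h | ⟨c, h, _⟩
      · exact hne (by simpa using h.symm)
      · exact rstep_nil h.1
  have bound : ∀ w, w ∈ (CFG.mk G.start (elimRules G.rules)).langB k →
      w ∈ (CFG.mk G.start (elimRules G.rules)).lang := by
    rintro w ⟨_, h⟩
    change Relation.ReflTransGen _ _ _
    generalize (List.map Sum.inr w : SForm T) = y at h ⊢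
    induction h with
    | refl => exact .refl
    | tail _ h ih => exact ih.tail h.1
  have hnl : ∀ r ∈ elimRules G.rules, r.2 ≠ [] := fun r hr => (mem_elimRules.1 hr).1
  have hne : ∀ w ∈ (CFG.mk G.start (elimRules G.rules)).lang, w ≠ [] := by
    intro w hw
    have : ∀ y : SForm T, Relation.ReflTransGen (RStep (elimRules G.rules)) [Sum.inl G.start] y →
        y ≠ [] := by
      intro y hy
      cases hy with
      | refl => simp
      | tail _ hs =>
        obtain ⟨r, hr, u, v, rfl, rfl⟩ := hs
        simp [hnl r hr]
    have := this _ hw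
    simpa using this
  refine ⟨⟨G.start, elimRules G.rules⟩, ?_, ?_, hnl⟩
  · unfold EqL at *
    rw [← hL]
    ext w
    constructor
    · rintro ⟨h, h'⟩
      exact ⟨elim_sound h, h'⟩
    · rintro ⟨h, h'⟩
      exact ⟨bound _ (key w h h'), h'⟩
  · intro w hw
    exact key w (elim_sound hw) (hne w hw)

/-! ### Simulation of a grammar of index `k` -/

/-- Renaming of nonterminals. -/
def enc (f : ℕ → ℕ) (x : SForm T) : SForm T := x.map (Sum.map f id)

theorem enc_append (f : ℕ → ℕ) (x y : SForm T) : enc f (x ++ y) = enc f x ++ enc f y := by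
  simp [enc]

theorem enc_cons_inl (f : ℕ → ℕ) (A : ℕ) (y : SForm T) :
    enc f (Sum.inl A :: y) = Sum.inl (f A) :: enc f y := rfl

theorem enc_cons_inr (f : ℕ → ℕ) (A : T) (y : SForm T) :
    enc f (Sum.inr A :: y) = Sum.inr A :: enc f y := rfl

theorem enc_term (f : ℕ → ℕ) (w : List T) :
    enc f (w.map Sum.inr : SForm T) = w.map Sum.inr := by
  simp [enc]

theorem enc_enc (f g : ℕ → ℕ) (h : ∀ a, f (g a) = a) (x : SForm T) : enc f (enc g x) = x := by
  induction x with
  | nil => rfl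
  | cons s x ih =>
    rcases s with A | a
    · rw [enc_cons_inl, enc_cons_inl, ih, h]
    · rw [enc_cons_inr, enc_cons_inr, ih]

theorem mem_enc {f : ℕ → ℕ} {x : SForm T} {B : ℕ} (h : Sum.inl B ∈ enc f x) : ∃ A, B = f A := by
  simp only [enc, List.mem_map] at h
  obtain ⟨s, _, hs⟩ := h
  rcases s with A | a
  · exact ⟨A, by simpa using hs.symm⟩
  · simp at hs

theorem enc_conv {P : List (Rule T)} {f g : ℕ → ℕ} (x : SForm T)
    (h : ∀ A, Sum.inl A ∈ x → (f A, [Sum.inl (g A)]) ∈ P) :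
    StepsN P (ntCount x) (enc f x) (enc g x) := by
  induction x with
  | nil => rfl
  | cons s x ih =>
    have ih := ih (fun A hA => h A (List.mem_cons_of_mem _ hA))
    rcases s with A | a
    · rw [ntCount_cons_inl, Nat.add_comm]
      exact stepsN_par (stepsN_one (h A (by simp))) ih
    · rw [ntCount_cons_inr]
      have := stepsN_ctx ih [Sum.inr a] []
      rw [List.append_nil, List.append_nil] at this
      exact this

theorem enc_sim {P : List (Rule T)} {f g : ℕ → ℕ} {k : ℕ} {u v z : SForm T} {A : ℕ}
    (h : ∀ B, Sum.inl B ∈ u ++ Sum.inl A :: v → (f B, [Sum.inl (g B)]) ∈ P)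
    (h0 : (f A, [Sum.inl (f A)]) ∈ P) (hz : (f A, z) ∈ P)
    (hk : ntCount (u ++ Sum.inl A :: v) ≤ k) :
    StepsN P k (enc f (u ++ Sum.inl A :: v)) (enc g u ++ z ++ enc g v) := by
  rw [ntCount_append, ntCount_cons_inl] at hk
  have hu := enc_conv (P := P) (f := f) (g := g) u (fun B hB => h B (by simp [hB]))
  have hv := enc_conv (P := P) (f := f) (g := g) v (fun B hB => h B (by simp [hB]))
  have hm := stepsN_loop h0 hz (k - (ntCount u + ntCount v + 1))
  have := stepsN_par (stepsN_par hu hm) hv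
  rw [enc_append, enc_cons_inl]
  have e : ntCount u + (k - (ntCount u + ntCount v + 1) + 1) + ntCount v = k := by omega
  rw [e] at this
  simpa using this

/-- First component. -/
def comp1 (P : List (Rule T)) : List (Rule T) :=
  P.map (fun r => (2 * r.1, enc (fun a => 2 * a + 1) r.2)) ++
    P.map (fun r => (2 * r.1, [Sum.inl (2 * r.1)])) ++
    P.map (fun r => (2 * r.1, [Sum.inl (2 * r.1 + 1)]))

/-- Second component. -/
def comp2 (P : List (Rule T)) : List (Rule T) :=
    P.map (fun r => (2 * r.1 + 1, [Sum.inl (2 * r.1 + 1)])) ++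
    P.map (fun r => (2 * r.1 + 1, [Sum.inl (2 * r.1)]))

/-- The simulating system. -/
def simSys (G : CFG T) : CDGS T where
  deg := 2
  start := 2 * G.start
  comp := ![comp1 G.rules, comp2 G.rules]

theorem comp1_t {P : List (Rule T)} {y : SForm T} :
    ¬ ∃ z, RStep (comp1 P) (enc (fun a => 2 * a + 1) y) z := by
  rintro ⟨z, r, hr, u, v, h, _⟩
  have hm : Sum.inl r.1 ∈ enc (fun a => 2 * a + 1) y := by rw [h]; simp
  obtain ⟨A, hA⟩ := mem_enc hm
  simp only [comp1, List.mem_append, List.mem_map] at hr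
  rcases hr with (⟨s, _, rfl⟩ | ⟨s, _, rfl⟩) | ⟨s, _, rfl⟩ <;> simp only at hA <;> omega

theorem comp2_t {P : List (Rule T)} {y : SForm T} :
    ¬ ∃ z, RStep (comp2 P) (enc (fun a => 2 * a) y) z := by
  rintro ⟨z, r, hr, u, v, h, _⟩
  have hm : Sum.inl r.1 ∈ enc (fun a => 2 * a) y := by rw [h]; simp
  obtain ⟨A, hA⟩ := mem_enc hm
  simp only [comp2, List.mem_append, List.mem_map] at hr
  rcases hr with ⟨s, _, rfl⟩ | ⟨s, _, rfl⟩ <;> simp only at hA <;> omega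

theorem sim_rstep {P : List (Rule T)} {x y : SForm T}
    (h : RStep (comp1 P) x y ∨ RStep (comp2 P) x y) :
    Relation.ReflTransGen (RStep P) (enc (fun a => a / 2) x) (enc (fun a => a / 2) y) := by
  have e1 : ∀ a, (2 * a + 1) / 2 = a := by intro a; omega
  have e2 : ∀ a, (2 * a) / 2 = a := by intro a; omega
  rcases h with ⟨r, hr, u, v, rfl, rfl⟩ | ⟨r, hr, u, v, rfl, rfl⟩
  · simp only [comp1, List.mem_append, List.mem_map] at hr
    rcases hr with (⟨s, hs, rfl⟩ | ⟨s, _, rfl⟩) | ⟨s, _, rfl⟩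
    · apply Relation.ReflTransGen.single
      refine ⟨s, hs, enc (fun a => a / 2) u, enc (fun a => a / 2) v, ?_, ?_⟩
      · simp [enc_append, enc_cons_inl, e2]
      · simp only [enc_append]
        rw [enc_enc _ _ e1]
    · simp [enc_append, enc_cons_inl, Relation.ReflTransGen.refl]
    · simp only [enc_append, enc_cons_inl, e1, e2, List.append_assoc, List.cons_append]
      exact .refl
  · simp only [comp2, List.mem_append, List.mem_map] at hr
    rcases hr with ⟨s, hs, rfl⟩ | ⟨s, _, rfl⟩
    · simp [enc_append, enc_cons_inl, Relation.ReflTransGen.refl]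
    · simp only [enc_append, enc_cons_inl, e1, e2, List.append_assoc, List.cons_append]
      exact .refl

theorem sim_sound {G : CFG T} {f : Mode} {x y : SForm T}
    (h : Relation.TransGen ((simSys G).ModeStep f) x y) :
    Relation.ReflTransGen (RStep G.rules) (enc (fun a => a / 2) x) (enc (fun a => a / 2) y) := by
  have hN : ∀ (Q : List (Rule T)), (Q = comp1 G.rules ∨ Q = comp2 G.rules) →
      ∀ x y, Relation.ReflTransGen (RStep Q) x y → Relation.ReflTransGen (RStep G.rules)
        (enc (fun a => a / 2) x) (enc (fun a => a / 2) y) := by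
    intro Q hQ x y h
    induction h with
    | refl => exact .refl
    | tail _ hs ih =>
      refine ih.trans (sim_rstep ?_)
      rcases hQ with rfl | rfl
      · exact .inl hs
      · exact .inr hs
  have h1 : ∀ x y, (simSys G).ModeStep f x y → Relation.ReflTransGen (RStep G.rules)
        (enc (fun a => a / 2) x) (enc (fun a => a / 2) y) := by
    rintro x y ⟨i, m, hm, _⟩
    refine hN _ ?_ x y (stepsN_rtg hm)
    change Fin 2 at i
    fin_cases i
    · exact .inl rfl
    · exact .inr rfl
  induction h with
  | single h => exact h1 _ _ h
  | tail _ h ih => exact ih.trans (h1 _ _ h)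

theorem sim_complete {G : CFG T} {k : ℕ} {x : SForm T} {w : List T}
    (h : Relation.ReflTransGen (fun x y => RStep G.rules x y ∧ ntCount y ≤ k) x (w.map Sum.inr)) :
    (∀ A, Sum.inl A ∈ x → ∃ z, (A, z) ∈ G.rules) ∧
    (ntCount x ≤ k → x = w.map Sum.inr ∨
      Relation.TransGen ((simSys G).ModeStep (.conj .t (.eq k))) (enc (fun a => 2 * a) x)
        (w.map Sum.inr)) := by
  induction h using Relation.ReflTransGen.head_induction_on with
  | refl => simp
  | head hs _ ih =>
    obtain ⟨ih1, ih2⟩ := ih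
    obtain ⟨⟨⟨A, z⟩, hr, u, v, rfl, rfl⟩, hk⟩ := hs
    have ih2 := ih2 hk
    have hN : ∀ B, Sum.inl B ∈ u ++ Sum.inl A :: v → ∃ z, (B, z) ∈ G.rules := by
      intro B hB
      simp only [List.mem_append, List.mem_cons, Sum.inl.injEq] at hB
      rcases hB with h | rfl | h
      · exact ih1 B (by simp [h])
      · exact ⟨z, hr⟩
      · exact ih1 B (by simp [h])
    refine ⟨hN, fun hx => .inr ?_⟩
    have s1 : (simSys G).ModeStep (.conj .t (.eq k)) (enc (fun a => 2 * a) (u ++ Sum.inl A :: v))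
        (enc (fun a => 2 * a + 1) (u ++ z ++ v)) := by
      refine ⟨(0 : Fin 2), k, ?_, comp1_t, rfl⟩
      rw [enc_append _ (u ++ z), enc_append _ u z]
      refine enc_sim (P := comp1 G.rules) (f := fun a => 2 * a) (g := fun a => 2 * a + 1) ?_ ?_ ?_ hx
      · intro B hB
        obtain ⟨z', h'⟩ := hN B hB
        simp only [comp1, List.mem_append, List.mem_map]
        exact .inr ⟨_, h', rfl⟩
      · simp only [comp1, List.mem_append, List.mem_map]
        exact .inl (.inr ⟨_, hr, rfl⟩)
      · simp only [comp1, List.mem_append, List.mem_map]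
        exact .inl (.inl ⟨_, hr, rfl⟩)
    rcases ih2 with e | ih2
    · have e' : u ++ z ++ v = w.map Sum.inr := e
      rw [e', enc_term] at s1
      exact .single s1
    · change Relation.TransGen _ (enc (fun a => 2 * a) (u ++ z ++ v)) _ at ih2
      change ∀ B, Sum.inl B ∈ u ++ z ++ v → _ at ih1
      change ntCount (u ++ z ++ v) ≤ k at hk
      generalize u ++ z ++ v = y at s1 ih1 ih2 hk
      by_cases hy : ∃ B, Sum.inl B ∈ y
      · obtain ⟨B, hB⟩ := hy
        obtain ⟨a, b, rfl⟩ := List.append_of_mem hB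
        refine .head s1 (.head ?_ ih2)
        refine ⟨(1 : Fin 2), k, ?_, comp2_t, rfl⟩
        have := enc_sim (P := comp2 G.rules) (f := fun a => 2 * a + 1) (g := fun a => 2 * a)
          (z := [Sum.inl (2 * B)]) (k := k) (u := a) (v := b) (A := B) ?_ ?_ ?_ hk
        · rw [enc_append (fun a => 2 * a) a, enc_cons_inl]
          rw [List.append_assoc] at this
          exact this
        · intro B hB
          obtain ⟨z', h'⟩ := ih1 B hB
          simp only [comp2, List.mem_append, List.mem_map]
          exact .inr ⟨_, h', rfl⟩
        · obtain ⟨z', h'⟩ := ih1 B hB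
          simp only [comp2, List.mem_append, List.mem_map]
          exact .inl ⟨_, h', rfl⟩
        · obtain ⟨z', h'⟩ := ih1 B hB
          simp only [comp2, List.mem_append, List.mem_map]
          exact .inr ⟨_, h', rfl⟩
      · have : enc (fun a => 2 * a + 1) y = enc (fun a => 2 * a) y := by
          apply List.map_congr_left
          intro s hs
          rcases s with A | a
          · exact absurd ⟨A, hs⟩ hy
          · rfl
        rw [this] at s1
        exact .head s1 ih2

theorem inclusion (lf : Bool) (k : ℕ) :
    CFFamInd T k ⊆ CDFam T lf 2 (Mode.conj Mode.t (Mode.eq k)) := by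
  rintro L ⟨G0, h0, h0'⟩
  obtain ⟨G, hL, hi, hl⟩ := exists_lamFree G0 h0 h0'
  refine ⟨simSys G, le_refl 2, fun _ => ?_, ?_⟩
  · intro i r hr
    change Fin 2 at i
    fin_cases i
    · change r ∈ comp1 G.rules at hr
      simp only [comp1, List.mem_append, List.mem_map] at hr
      rcases hr with (⟨s, hs, rfl⟩ | ⟨s, _, rfl⟩) | ⟨s, _, rfl⟩
      · simpa [enc] using hl s hs
      · simp
      · simp
    · change r ∈ comp2 G.rules at hr
      simp only [comp2, List.mem_append, List.mem_map] at hr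
      rcases hr with ⟨s, _, rfl⟩ | ⟨s, _, rfl⟩ <;> simp
  · have : (simSys G).lang (.conj .t (.eq k)) = G.lang := by
      ext w
      constructor
      · intro h
        have := sim_sound (f := .conj .t (.eq k)) h
        rw [enc_term] at this
        simpa [simSys, enc, CFG.lang] using this
      · intro h
        obtain ⟨h1, h2⟩ := hi h
        rcases (sim_complete h2).2 h1 with h | h
        · rcases w with _ | ⟨a, w⟩ <;> simp at h
        · exact h
    rw [this]
    exact hL

/-! ### A node of medium yield -/

theorem stepsN_term {P : List (Rule T)} {m : ℕ} {a : T} {y : SForm T}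
    (h : StepsN P m [Sum.inr a] y) : y = [Sum.inr a] := by
  cases m with
  | zero => exact h.symm
  | succ m =>
    obtain ⟨z, hz, _⟩ := h
    obtain ⟨A, hA, _⟩ := rstep_single hz
    cases hA

theorem pigeon {P : List (Rule T)} {c : ℕ} (hc : 1 ≤ c) (z : SForm T) :
    ∀ (m : ℕ) (w : List T), StepsN P m z (w.map Sum.inr) → z.length * c < w.length →
    ∃ (A : ℕ) (u x v : List T) (m' : ℕ), m' ≤ m ∧ w = u ++ x ++ v ∧ c < x.length ∧
      StepsN P m' [Sum.inl A] (x.map Sum.inr) ∧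
      Relation.ReflTransGen (RStep P) z (u.map Sum.inr ++ Sum.inl A :: v.map Sum.inr) := by
  induction z with
  | nil =>
    intro m w h hl
    cases m with
    | zero =>
      have h : [] = w.map Sum.inr := h
      rcases w with _ | ⟨a, w⟩ <;> simp at h hl
    | succ m =>
      obtain ⟨z, hz, _⟩ := h
      exact (rstep_nil hz).elim
  | cons s z ih =>
    intro m w h hl
    obtain ⟨m1, m2, y1, y2, e, ey, h1, h2⟩ := stepsN_split (x1 := [s]) (x2 := z) h
    obtain ⟨w1, w2, rfl, rfl, rfl⟩ := List.map_eq_append_iff.1 ey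
    by_cases hw : c < w1.length
    · rcases s with A | a
      · refine ⟨A, [], w1, w2, m1, by omega, by simp, hw, h1, ?_⟩
        exact rtg_par (.refl : Relation.ReflTransGen (RStep P) [Sum.inl A] [Sum.inl A])
          (stepsN_rtg h2)
      · have := congrArg List.length (stepsN_term h1)
        simp at this
        omega
    · obtain ⟨A, u, x, v, m', hm', rfl, hx, hd, hr⟩ := ih m2 w2 h2 (by
        simp only [List.length_cons, List.length_append, Nat.add_mul, Nat.one_mul] at hl
        omega)
      refine ⟨A, w1 ++ u, x, v, m', by omega, by simp, hx, hd, ?_⟩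
      have := rtg_par (stepsN_rtg h1) hr
      simpa using this

theorem medium {P : List (Rule T)} {c r : ℕ} (hc : 1 ≤ c) (hr : ∀ p ∈ P, p.2.length ≤ r)
    (m : ℕ) : ∀ (z : SForm T) (w : List T), StepsN P m z (w.map Sum.inr) →
    z.length * c < w.length →
    ∃ (A : ℕ) (u x v : List T), w = u ++ x ++ v ∧ c < x.length ∧ x.length ≤ r * c ∧
      (∃ z, (A, z) ∈ P) ∧
      Relation.ReflTransGen (RStep P) [Sum.inl A] (x.map Sum.inr) ∧
      Relation.ReflTransGen (RStep P) z (u.map Sum.inr ++ Sum.inl A :: v.map Sum.inr) := by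
  induction m using Nat.strong_induction_on with
  | _ m ih =>
    intro z w h hl
    obtain ⟨A, u, x, v, m', hm', rfl, hx, hd, hz⟩ := pigeon hc z m w h hl
    cases m' with
    | zero =>
      have hd : [Sum.inl A] = x.map Sum.inr := hd
      rcases x with _ | ⟨a, x⟩ <;> simp at hd
    | succ m' =>
      have hd0 := stepsN_rtg hd
      obtain ⟨z', hz', hd⟩ := hd
      obtain ⟨_, hA, hmem⟩ := rstep_single hz'
      cases hA
      by_cases hle : x.length ≤ r * c
      · exact ⟨A, u, x, v, rfl, hx, hle, ⟨_, hmem⟩, hd0, hz⟩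
      · obtain ⟨B, u', x', v', rfl, h1, h2, h3, h4, h5⟩ := ih m' (by omega) z' x hd
          (lt_of_le_of_lt (Nat.mul_le_mul_right c (hr _ hmem)) (by omega))
        refine ⟨B, u ++ u', x', v' ++ v, by simp, h1, h2, h3, h4, ?_⟩
        refine hz.trans ?_
        have := rtg_ctx ((Relation.ReflTransGen.single hz').trans h5)
          (u.map Sum.inr) (v.map Sum.inr)
        simpa using this

end generic

/-! ### A non-context-free language -/

theorem list_bound {α : Type*} (Q : α → ℕ → Prop) (hmono : ∀ a m n, m ≤ n → Q a m → Q a n)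
    (l : List α) (h : ∀ a ∈ l, ∃ m, Q a m) : ∃ M, ∀ a ∈ l, Q a M := by
  induction l with
  | nil => exact ⟨0, by simp⟩
  | cons a l ih =>
    obtain ⟨M, hM⟩ := ih (fun b hb => h b (by simp [hb]))
    obtain ⟨m, hm⟩ := h a (by simp)
    refine ⟨max M m, ?_⟩
    intro b hb
    rcases List.mem_cons.1 hb with rfl | hb
    · exact hmono _ _ _ (le_max_right _ _) hm
    · exact hmono _ _ _ (le_max_left _ _) (hM b hb)

/-- The words with `n` zeros, `n` ones and `j * n` twos. -/
def theWord (j n : ℕ) : List ℕ :=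
  List.replicate n 0 ++ List.replicate n 1 ++ List.replicate (j * n) 2

theorem factor_cases {j n : ℕ} {u x v : List ℕ} (h : theWord j n = u ++ x ++ v)
    (hx : x.length ≤ n) :
    (x.count 0 = 0 ∨ x.count 2 = 0) ∧ x.length = x.count 0 + x.count 1 + x.count 2 := by
  constructor
  · by_cases hu : n ≤ u.length
    · left
      rw [List.count_eq_zero]
      intro hm
      have h1 : (theWord j n).drop n = List.replicate n 1 ++ List.replicate (j * n) 2 := by
        simp [theWord, List.drop_append]
      have h2 : 0 ∈ (theWord j n).drop n := by
        rw [h, List.append_assoc, List.drop_append]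
        simp [Nat.sub_eq_zero_of_le hu, hm]
      rw [h1] at h2
      simp at h2
    · right
      rw [List.count_eq_zero]
      intro hm
      have h1 : (theWord j n).take (n + n) = List.replicate n 0 ++ List.replicate n 1 := by
        simp [theWord, List.take_append]
      have h2 : 2 ∈ (theWord j n).take (n + n) := by
        rw [h, List.take_append, List.take_of_length_le (by simp; omega)]
        simp [hm]
      rw [h1] at h2
      simp at h2
  · have hs : ∀ a ∈ x, a = 0 ∨ a = 1 ∨ a = 2 := by
      intro a ha
      have : a ∈ theWord j n := by rw [h]; simp [ha]
      simp only [theWord, List.mem_append, List.mem_replicate] at this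
      tauto
    clear h hx
    induction x with
    | nil => rfl
    | cons a x ih =>
      have := ih (fun b hb => hs b (by simp [hb]))
      rcases hs a (by simp) with rfl | rfl | rfl <;> simp <;> omega

theorem not_cf {j : ℕ} (hj : 1 ≤ j) (L : Set (List ℕ)) (h1 : ∀ n, 1 ≤ n → theWord j n ∈ L)
    (h2 : ∀ w ∈ L, w.count 1 = w.count 0 ∧ w.count 2 = j * w.count 0) (G : CFG ℕ)
    (hG : EqL G.lang L) : False := by
  have hb : ∀ w ∈ G.lang, w.count 1 = w.count 0 ∧ w.count 2 = j * w.count 0 := by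
    intro w hw
    by_cases hn : w = []
    · subst hn; simp
    · have : w ∈ G.lang \ {[]} := ⟨hw, hn⟩
      rw [hG] at this
      exact h2 w this.1
  obtain ⟨r, hr⟩ := list_bound (fun (p : Rule ℕ) r => p.2.length ≤ r)
    (fun a m n h h' => h'.trans h) G.rules (fun p _ => ⟨_, le_refl _⟩)
  obtain ⟨M, hM⟩ := list_bound (fun (p : Rule ℕ) M => ∀ u v x : List ℕ,
      Relation.ReflTransGen (RStep G.rules) [Sum.inl G.start]
        (u.map Sum.inr ++ Sum.inl p.1 :: v.map Sum.inr) →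
      Relation.ReflTransGen (RStep G.rules) [Sum.inl p.1] (x.map Sum.inr) →
      x.count 1 ≤ x.count 0 + M ∧ x.count 0 ≤ x.count 1 + M ∧
      x.count 2 ≤ j * x.count 0 + M ∧ j * x.count 0 ≤ x.count 2 + M) (by
        intro a m n hmn h u v x hu hx
        have := h u v x hu hx
        omega) G.rules (by
        intro p _
        by_cases hp : ∃ u v x : List ℕ, Relation.ReflTransGen (RStep G.rules) [Sum.inl G.start]
            (u.map Sum.inr ++ Sum.inl p.1 :: v.map Sum.inr) ∧
            Relation.ReflTransGen (RStep G.rules) [Sum.inl p.1] (x.map Sum.inr)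
        · obtain ⟨u0, v0, x0, hu0, hx0⟩ := hp
          have key : ∀ x : List ℕ,
              Relation.ReflTransGen (RStep G.rules) [Sum.inl p.1] (x.map Sum.inr) →
              u0 ++ x ++ v0 ∈ G.lang := by
            intro x hx
            have := hu0.trans (by simpa using rtg_ctx hx (u0.map Sum.inr) (v0.map Sum.inr))
            simpa [CFG.lang] using this
          refine ⟨x0.count 0 + x0.count 1 + x0.count 2 + j * x0.count 0, ?_⟩
          intro u v x _ hx
          have a := hb _ (key x hx)
          have b := hb _ (key x0 hx0)
          simp only [List.count_append, Nat.mul_add] at a b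
          omega
        · exact ⟨0, fun u v x hu hx => absurd ⟨u, v, x, hu, hx⟩ hp⟩)
  set c := 3 * M + 1 with hc
  set n := (r + 1) * c with hn
  have hcn : c ≤ n := Nat.le_mul_of_pos_left _ (by omega)
  have hw : theWord j n ∈ G.lang := by
    have : theWord j n ∈ L \ {[]} := ⟨h1 n (by omega), by
      intro h
      have := congrArg List.length (show theWord j n = [] from h)
      simp [theWord] at this
      try omega⟩
    rw [← hG] at this
    exact this.1
  obtain ⟨m, hm⟩ := rtg_stepsN hw
  obtain ⟨A, u, x, v, e, hx1, hx2, ⟨z, hz⟩, hA, hS⟩ := medium (c := c) (by omega) hr m _ _ hm (by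
    simp [theWord]; omega)
  have hxn : x.length ≤ n := hx2.trans (Nat.mul_le_mul_right c (by omega))
  obtain ⟨hf, hlen⟩ := factor_cases e hxn
  have := hM _ hz u v x hS hA
  have hj0 : x.count 0 ≤ j * x.count 0 := Nat.le_mul_of_pos_left _ (by omega)
  rcases hf with h0 | h0
  · rw [h0, Nat.mul_zero] at this
    omega
  · omega

/-! Nonterminals: `A = 0`, `A' = 1`, `B = 2`, `B' = 3`, `S = 4`. -/

/-- First component of the witness system. -/
def wit1 : List (Rule ℕ) :=
  [(0, [Sum.inr 0, Sum.inl 1, Sum.inr 1]), (0, [Sum.inr 0, Sum.inr 1]),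
   (2, [Sum.inr 2, Sum.inl 3]), (2, [Sum.inr 2])]

/-- Second component of the witness system. -/
def wit2 (j : ℕ) : List (Rule ℕ) :=
  [(4, [Sum.inl 4]), (4, Sum.inl 0 :: List.replicate j (Sum.inl 2)),
   (1, [Sum.inl 0]), (3, [Sum.inl 2])]

/-- The witness system. -/
def witSys (j : ℕ) : CDGS ℕ where
  deg := 2
  start := 4
  comp := ![wit1, wit2 j]

/-- Occurrences of a nonterminal. -/
def cN (A : ℕ) : SForm ℕ → ℕ
  | [] => 0
  | Sum.inl B :: x => cN A x + if B = A then 1 else 0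
  | Sum.inr _ :: x => cN A x

/-- Occurrences of a terminal. -/
def cT (A : ℕ) : SForm ℕ → ℕ
  | [] => 0
  | Sum.inl _ :: x => cT A x
  | Sum.inr B :: x => cT A x + if B = A then 1 else 0

theorem cN_append (A : ℕ) (x y : SForm ℕ) : cN A (x ++ y) = cN A x + cN A y := by
  induction x with
  | nil => simp [cN]
  | cons s x ih => rcases s with B | b <;> simp only [cN, List.cons_append, ih] <;> omega

theorem cT_append (A : ℕ) (x y : SForm ℕ) : cT A (x ++ y) = cT A x + cT A y := by
  induction x with
  | nil => simp [cT]
  | cons s x ih => rcases s with B | b <;> simp only [cT, List.cons_append, ih] <;> omega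

theorem cN_rep (A B n : ℕ) : cN A (List.replicate n (Sum.inl B)) = if B = A then n else 0 := by
  induction n with
  | zero => simp [cN]
  | succ n ih => simp only [cN, List.replicate_succ, ih]; split_ifs <;> rfl

theorem cT_rep (A B n : ℕ) : cT A (List.replicate n (Sum.inl B)) = 0 := by
  induction n with
  | zero => simp [cT]
  | succ n ih => simp only [cT, List.replicate_succ, ih]

theorem cT_map (A : ℕ) (w : List ℕ) : cT A (w.map Sum.inr) = w.count A := by
  induction w with
  | nil => rfl
  | cons a w ih => simp [cT, ih, List.count_cons]

theorem cN_eq_zero {A : ℕ} {x : SForm ℕ} (h : Sum.inl A ∉ x) : cN A x = 0 := by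
  induction x with
  | nil => rfl
  | cons s x ih =>
    simp only [List.mem_cons, not_or] at h
    rcases s with B | b
    · have : B ≠ A := fun e => h.1 (by rw [e])
      simp [cN, ih h.2, this]
    · simpa [cN] using ih h.2

/-- The invariant. -/
def Inv (j : ℕ) (x : SForm ℕ) : Prop :=
  cN 4 x = 0 ∧ cN 0 x + cN 1 x ≤ 1 ∧ cN 2 x + cN 3 x ≤ j ∧ cT 1 x = cT 0 x ∧
    cT 2 x = j * cT 0 x

theorem wit1_steps {m : ℕ} : ∀ {x y : SForm ℕ}, StepsN wit1 m x y →
    cN 0 x + cN 2 x = cN 0 y + cN 2 y + m ∧ cN 4 y = cN 4 x ∧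
    cN 0 y + cN 1 y ≤ cN 0 x + cN 1 x ∧ cN 2 y + cN 3 y ≤ cN 2 x + cN 3 x ∧
    cT 0 y + cN 0 y = cT 0 x + cN 0 x ∧ cT 1 y + cN 0 y = cT 1 x + cN 0 x ∧
    cT 2 y + cN 2 y = cT 2 x + cN 2 x := by
  induction m with
  | zero => intro x y h; cases h; simp
  | succ m ih =>
    rintro x y ⟨z, ⟨r, hr, u, v, rfl, rfl⟩, h⟩
    have := ih h
    simp only [wit1, List.mem_cons, List.not_mem_nil, or_false] at hr
    rcases hr with rfl | rfl | rfl | rfl <;>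
      simp [cN, cT, cN_append, cT_append] at this ⊢ <;> omega

theorem wit2_steps {j m : ℕ} : ∀ {x y : SForm ℕ}, cN 4 x = 0 → StepsN (wit2 j) m x y →
    cN 4 y = 0 ∧
    cN 0 y + cN 1 y = cN 0 x + cN 1 x ∧ cN 2 y + cN 3 y = cN 2 x + cN 3 x ∧
    cT 0 y = cT 0 x ∧ cT 1 y = cT 1 x ∧ cT 2 y = cT 2 x := by
  induction m with
  | zero => intro x y h0 h; cases h; simp [h0]
  | succ m ih =>
    rintro x y h0 ⟨z, ⟨r, hr, u, v, rfl, rfl⟩, h⟩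
    simp only [wit2, List.mem_cons, List.not_mem_nil, or_false] at hr
    rcases hr with rfl | rfl | rfl | rfl
    · simp [cN, cN_append] at h0
    · simp [cN, cN_append] at h0
    all_goals
      have := ih (by simpa [cN, cN_append] using h0) h
      simp [cN, cT, cN_append, cT_append] at this ⊢
      omega

theorem wit2_start {j m : ℕ} {y : SForm ℕ} (h : StepsN (wit2 j) m [Sum.inl 4] y) :
    y = [Sum.inl 4] ∨ Inv j y := by
  induction m with
  | zero => exact .inl h.symm
  | succ m ih =>
    obtain ⟨z, hz, h⟩ := h
    obtain ⟨A, hA, hm⟩ := rstep_single hz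
    cases hA
    simp [wit2] at hm
    rcases hm with rfl | rfl
    · exact ih h
    · right
      have := wit2_steps (by simp [cN, cN_rep]) h
      simp [cN, cT, cN_rep, cT_rep] at this
      obtain ⟨j1, j2, j3, j4, j5, j6⟩ := this
      refine ⟨j1, by omega, by omega, by omega, ?_⟩
      rw [j6, j4]; rfl

theorem wit_step {j : ℕ} {x y : SForm ℕ}
    (h : (witSys j).ModeStep (.conj .t (.eq (j + 1))) x y) (hx : x = [Sum.inl 4] ∨ Inv j x) :
    y = [Sum.inl 4] ∨ Inv j y := by
  obtain ⟨i, m, hm, ht, hk⟩ := h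
  have hk : m = j + 1 := hk
  subst hk
  change Fin 2 at i
  fin_cases i
  · change StepsN wit1 _ _ _ at hm
    change ¬ ∃ z, RStep wit1 y z at ht
    have h0 : cN 0 y = 0 := by
      apply cN_eq_zero
      intro hmem
      obtain ⟨a, b, rfl⟩ := List.append_of_mem hmem
      exact ht ⟨_, (0, [Sum.inr 0, Sum.inr 1]), by simp [wit1], a, b, rfl, rfl⟩
    have h2 : cN 2 y = 0 := by
      apply cN_eq_zero
      intro hmem
      obtain ⟨a, b, rfl⟩ := List.append_of_mem hmem
      exact ht ⟨_, (2, [Sum.inr 2]), by simp [wit1], a, b, rfl, rfl⟩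
    have := wit1_steps hm
    rcases hx with rfl | hx
    · simp [cN, cT] at this
    · right
      obtain ⟨i1, i2, i3, i4, i5⟩ := hx
      have e0 : cT 0 y = cT 0 x + 1 := by omega
      refine ⟨by omega, by omega, by omega, by omega, ?_⟩
      rw [e0, Nat.mul_add, ← i5]
      omega
  · change StepsN (wit2 j) _ _ _ at hm
    rcases hx with rfl | hx
    · exact wit2_start hm
    · right
      obtain ⟨i1, i2, i3, i4, i5⟩ := hx
      obtain ⟨j1, j2, j3, j4, j5, j6⟩ := wit2_steps i1 hm
      refine ⟨by omega, by omega, by omega, by omega, ?_⟩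
      rw [j6, j4, i5]

theorem wit_sound {j : ℕ} {w : List ℕ} (hw : w ∈ (witSys j).lang (.conj .t (.eq (j + 1)))) :
    w.count 1 = w.count 0 ∧ w.count 2 = j * w.count 0 := by
  have : ∀ y, Relation.TransGen ((witSys j).ModeStep (.conj .t (.eq (j + 1)))) [Sum.inl 4] y →
      y = [Sum.inl 4] ∨ Inv j y := by
    intro y hy
    induction hy with
    | single h => exact wit_step h (.inl rfl)
    | tail _ h ih => exact wit_step h ih
  rcases this _ hw with h | ⟨_, _, _, h1, h2⟩
  · rcases w with _ | ⟨a, w⟩ <;> simp at h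
  · rw [cT_map, cT_map] at h1 h2
    exact ⟨h1, h2⟩

/-- Tail part of the sentential forms: `(2^n B)^j`. -/
def tailF (n : ℕ) (e : SForm ℕ) : ℕ → SForm ℕ
  | 0 => []
  | j + 1 => (List.replicate n (Sum.inr 2) ++ e) ++ tailF n e j

theorem tailF_steps {P : List (Rule ℕ)} {n n' A : ℕ} {e e' : SForm ℕ} (hr : (A, e) ∈ P)
    (he : List.replicate n (Sum.inr 2) ++ e = List.replicate n' (Sum.inr 2) ++ e') (j : ℕ) :
    StepsN P j (tailF n [Sum.inl A] j) (tailF n' e' j) := by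
  induction j with
  | zero => rfl
  | succ j ih =>
    simp only [tailF]
    rw [Nat.add_comm]
    refine stepsN_par ?_ ih
    rw [← he]
    have := stepsN_ctx (stepsN_one hr) (List.replicate n (Sum.inr 2)) []
    simpa using this

theorem mem_tailF {n j : ℕ} {e : SForm ℕ} {A : ℕ} (h : Sum.inl A ∈ tailF n e j) :
    Sum.inl A ∈ e := by
  induction j with
  | zero => simp [tailF] at h
  | succ j ih =>
    simp [tailF, List.mem_replicate] at h
    tauto

theorem tailF_nil (n j : ℕ) : tailF n [] j = List.replicate (j * n) (Sum.inr 2) := by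
  induction j with
  | zero => simp [tailF]
  | succ j ih =>
    rw [tailF, ih, List.append_nil, ← List.replicate_add]
    congr 1
    rw [Nat.add_mul]; omega

/-- Sentential forms of the witness system. -/
def formF (j n : ℕ) (e e' : SForm ℕ) : SForm ℕ :=
  (List.replicate n (Sum.inr 0) ++ e ++ List.replicate n (Sum.inr 1)) ++ tailF n e' j

theorem mem_formF {j n : ℕ} {e e' : SForm ℕ} {A : ℕ} (h : Sum.inl A ∈ formF j n e e') :
    Sum.inl A ∈ e ∨ Sum.inl A ∈ e' := by
  simp only [formF, List.mem_append, List.mem_replicate] at h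
  rcases h with ((h | h) | h) | h
  · simp at h
  · exact .inl h
  · simp at h
  · exact .inr (mem_tailF h)

theorem form_step {P : List (Rule ℕ)} {j n n' A B : ℕ} {e e' f f' : SForm ℕ}
    (hA : (A, e) ∈ P) (hB : (B, f) ∈ P)
    (he : List.replicate n (Sum.inr 0) ++ e ++ List.replicate n (Sum.inr 1) =
      List.replicate n' (Sum.inr 0) ++ e' ++ List.replicate n' (Sum.inr 1))
    (hf : List.replicate n (Sum.inr 2) ++ f = List.replicate n' (Sum.inr 2) ++ f') :
    StepsN P (j + 1) (formF j n [Sum.inl A] [Sum.inl B]) (formF j n' e' f') := by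
  rw [Nat.add_comm]
  refine stepsN_par ?_ (tailF_steps hB hf j)
  rw [← he]
  exact stepsN_ctx (stepsN_one hA) _ _

theorem wit1_t {j n : ℕ} {e f : SForm ℕ} (he : ∀ A, Sum.inl A ∈ e → A = 1)
    (hf : ∀ A, Sum.inl A ∈ f → A = 3) : ¬ ∃ z, RStep wit1 (formF j n e f) z := by
  rintro ⟨z, r, hr, u, v, h, _⟩
  have hm : Sum.inl r.1 ∈ formF j n e f := by rw [h]; simp
  have h1 : r.1 = 1 ∨ r.1 = 3 := (mem_formF hm).imp (he _) (hf _)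
  simp only [wit1, List.mem_cons, List.not_mem_nil, or_false] at hr
  rcases hr with rfl | rfl | rfl | rfl <;> simp at h1

theorem wit2_t {j n : ℕ} : ¬ ∃ z, RStep (wit2 j) (formF j n [Sum.inl 0] [Sum.inl 2]) z := by
  rintro ⟨z, r, hr, u, v, h, _⟩
  have hm : Sum.inl r.1 ∈ formF j n [Sum.inl 0] [Sum.inl 2] := by rw [h]; simp
  have h1 : r.1 = 0 ∨ r.1 = 2 := by simpa using mem_formF hm
  simp only [wit2, List.mem_cons, List.not_mem_nil, or_false] at hr
  rcases hr with rfl | rfl | rfl | rfl <;> simp at h1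

theorem rep_succ {α : Type*} (n : ℕ) (a : α) :
    List.replicate n a ++ [a] = List.replicate (n + 1) a := by
  rw [List.replicate_add]; rfl

theorem rep_succ' {α : Type*} (n : ℕ) (a : α) :
    [a] ++ List.replicate n a = List.replicate (n + 1) a := rfl

theorem wit_reach (j n : ℕ) : Relation.TransGen ((witSys j).ModeStep (.conj .t (.eq (j + 1))))
    [Sum.inl 4] (formF j n [Sum.inl 0] [Sum.inl 2]) := by
  induction n with
  | zero =>
    refine .single ⟨(1 : Fin 2), j + 1, ?_, wit2_t, rfl⟩
    have e : ∀ i, tailF 0 [Sum.inl 2] i = List.replicate i (Sum.inl 2) := by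
      intro i
      induction i with
      | zero => rfl
      | succ i ih => rw [tailF, ih]; rfl
    have : formF j 0 [Sum.inl 0] [Sum.inl 2] = Sum.inl 0 :: List.replicate j (Sum.inl 2) := by
      rw [formF, e]; rfl
    rw [this]
    exact stepsN_loop (P := wit2 j) (by simp [wit2]) (by simp [wit2]) j
  | succ n ih =>
    refine (ih.tail (b := formF j n [Sum.inl 0] [Sum.inl 2])
      (c := formF j (n + 1) [Sum.inl 1] [Sum.inl 3]) ?_).tail ?_
    · refine ⟨(0 : Fin 2), j + 1, ?_, wit1_t (by simp) (by simp), rfl⟩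
      refine form_step (P := wit1) (e := [Sum.inr 0, Sum.inl 1, Sum.inr 1])
        (f := [Sum.inr 2, Sum.inl 3]) (by simp [wit1]) (by simp [wit1]) ?_ ?_
      · rw [← rep_succ n (Sum.inr 0), ← rep_succ' n (Sum.inr 1)]
        simp
      · rw [← rep_succ n (Sum.inr 2)]
        simp
    · refine ⟨(1 : Fin 2), j + 1, ?_, wit2_t, rfl⟩
      exact form_step (P := wit2 j) (e := [Sum.inl 0])
        (f := [Sum.inl 2]) (by simp [wit2]) (by simp [wit2]) rfl rfl

theorem wit_complete (j n : ℕ) (hn : 1 ≤ n) :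
    theWord j n ∈ (witSys j).lang (.conj .t (.eq (j + 1))) := by
  obtain ⟨n, rfl⟩ := Nat.exists_eq_add_of_le' hn
  have e : (theWord j (n + 1)).map Sum.inr = formF j (n + 1) [] [] := by
    simp [theWord, formF, tailF_nil]
  change Relation.TransGen _ _ _
  rw [e]
  refine (wit_reach j n).tail ⟨(0 : Fin 2), j + 1, ?_, wit1_t (by simp) (by simp), rfl⟩
  refine form_step (P := wit1) (e := [Sum.inr 0, Sum.inr 1])
        (f := [Sum.inr 2]) (by simp [wit1]) (by simp [wit1]) ?_ ?_
  · rw [← rep_succ n (Sum.inr 0), ← rep_succ' n (Sum.inr 1)]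
    simp
  · rw [← rep_succ n (Sum.inr 2)]
    simp

/-- For every k ≥ 2, L_k(CF) ⊊ L(CD_2, CF[−λ], (t∧=k)),
both with and without erasing rules. -/
theorem stmt3 (lf : Bool) (k : ℕ) (hk : 2 ≤ k) :
    CFFamInd ℕ k ⊂ CDFam ℕ lf 2 (Mode.conj Mode.t (Mode.eq k)) := by
  refine ⟨inclusion lf k, fun hsub => ?_⟩
  obtain ⟨j, rfl⟩ := Nat.exists_eq_add_of_le' (show 1 ≤ k by omega)
  have hm : (witSys j).lang (.conj .t (.eq (j + 1))) ∈
      CDFam ℕ lf 2 (Mode.conj Mode.t (Mode.eq (j + 1))) := by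
    refine ⟨witSys j, le_refl 2, fun _ => ?_, rfl⟩
    intro i r hr
    change Fin 2 at i
    fin_cases i
    · change r ∈ wit1 at hr
      simp only [wit1, List.mem_cons, List.not_mem_nil, or_false] at hr
      rcases hr with rfl | rfl | rfl | rfl <;> simp
    · change r ∈ wit2 j at hr
      simp only [wit2, List.mem_cons, List.not_mem_nil, or_false] at hr
      rcases hr with rfl | rfl | rfl | rfl <;> simp
  obtain ⟨G, hG, _⟩ := hsub hm
  exact not_cf (by omega) _ (wit_complete j) (fun w hw => wit_sound hw) G hG

end CDHybrid
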